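/- Chain rule for divided differences (Faà di Bruno type): if f = g ∘ φ with g and φ sufficiently smooth, then f[x_0, ..., x_n] = ∑_{k=1}^{n} ∑_{0 = i_0 < i_1 < ⋯ < i_k = n} g[φ(x_{i_0}), ..., φ(x_{i_k})] ∏_{j=0}^{k-1} φ[x_{i_j}, x_{i_j + 1}, ..., x_{i_{j+1}}]. -/

import Mathlib

open MeasureTheory

/-- The divided difference `f[x₀,…,xₙ]`, defined for `Cⁿ` functions (and
arbitrary, possibly coinciding, points) via Hermite's integral representation
`f[x₀,…,xₙ] = ∫_{Δₙ} f⁽ⁿ⁾(s₀x₀ + ⋯ + sₙxₙ) dⁿs`; it agrees with the usual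
recursive definition on distinct points and extends it continuously. -/
noncomputable def divDiff {E : Type*} [NormedAddCommGroup E] [NormedSpace ℝ E]
    (f : ℝ → E) (n : ℕ) (x : Fin (n + 1) → ℝ) : E :=
  ∫ s in {s : Fin n → ℝ | (∀ i, 0 ≤ s i) ∧ ∑ i, s i ≤ 1},
    iteratedDeriv n f ((1 - ∑ i, s i) * x 0 + ∑ i : Fin n, s i * x i.succ)

/-- Auxiliary parametric integral. -/
noncomputable def ddI (k : ℕ) (h : ℝ → ℝ) (z y : ℝ) : ℝ :=
  ∫ s in (0 : ℝ)..1, s ^ k * h (z + s * (y - z))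

/-- The smooth difference quotient of `f` at `z`. -/
noncomputable def ddS (z : ℝ) (f : ℝ → ℝ) : ℝ → ℝ := ddI 0 (deriv f) z

theorem ddI_hasDerivAt (k : ℕ) (h : ℝ → ℝ) (hh : ContDiff ℝ (⊤ : ℕ∞) h) (z y : ℝ) :
    HasDerivAt (ddI k h z) (ddI (k + 1) (deriv h) z y) y := by
  have hd : Differentiable ℝ h := hh.differentiable (by simp)
  have hc : Continuous h := hh.continuous
  have hc' : Continuous (deriv h) := hh.continuous_deriv (by simp)
  have hcF : Continuous (fun p : ℝ × ℝ => p.2 ^ (k + 1) * deriv h (z + p.2 * (p.1 - z))) := by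
    fun_prop
  obtain ⟨C, hC⟩ := ((isCompact_Icc (a := y - 1) (b := y + 1)).prod
    (isCompact_Icc (a := (0 : ℝ)) (b := 1))).exists_bound_of_continuousOn hcF.continuousOn
  refine (intervalIntegral.hasDerivAt_integral_of_dominated_loc_of_deriv_le
    (F := fun y s => s ^ k * h (z + s * (y - z)))
    (F' := fun y s => s ^ (k + 1) * deriv h (z + s * (y - z)))
    (bound := fun _ => C) (s := Set.Icc (y - 1) (y + 1))
    (Icc_mem_nhds (by linarith) (by linarith)) ?_ ?_ ?_ ?_ ?_ ?_).2
  · refine Filter.Eventually.of_forall fun x => Continuous.aestronglyMeasurable (by fun_prop)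
  · exact Continuous.intervalIntegrable (by fun_prop) _ _
  · exact Continuous.aestronglyMeasurable (by fun_prop)
  · refine Filter.Eventually.of_forall fun t ht x hx => ?_
    rw [Set.uIoc_of_le zero_le_one] at ht
    exact hC (x, t) ⟨hx, ht.1.le, ht.2⟩
  · exact intervalIntegrable_const
  · refine Filter.Eventually.of_forall fun t ht x hx => ?_
    have h1 : HasDerivAt (fun x : ℝ => z + t * (x - z)) t x := by
      simpa using (((hasDerivAt_id x).sub_const z).const_mul t).const_add z
    have h2 := ((hd (z + t * (x - z))).hasDerivAt.comp x h1).const_mul (t ^ k)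
    exact h2.congr_deriv (by ring)

theorem dd_deriv_smooth {f : ℝ → ℝ} (hf : ContDiff ℝ (⊤ : ℕ∞) f) :
    ContDiff ℝ (⊤ : ℕ∞) (deriv f) := (contDiff_infty_iff_deriv.1 hf).2

theorem dd_iter_smooth {f : ℝ → ℝ} (hf : ContDiff ℝ (⊤ : ℕ∞) f) (n : ℕ) :
    ContDiff ℝ (⊤ : ℕ∞) (iteratedDeriv n f) := by
  induction n with
  | zero => simpa using hf
  | succ n ih => rw [iteratedDeriv_succ]; exact dd_deriv_smooth ih

theorem ddI_iter (h : ℝ → ℝ) (hh : ContDiff ℝ (⊤ : ℕ∞) h) (z : ℝ) (n : ℕ) :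
    iteratedDeriv n (ddI 0 h z) = ddI n (iteratedDeriv n h) z := by
  induction n with
  | zero => simp
  | succ n ih =>
    rw [iteratedDeriv_succ, ih, iteratedDeriv_succ]
    funext y
    exact (ddI_hasDerivAt n _ (dd_iter_smooth hh n) z y).deriv

theorem ddS_smooth (z : ℝ) {f : ℝ → ℝ} (hf : ContDiff ℝ (⊤ : ℕ∞) f) :
    ContDiff ℝ (⊤ : ℕ∞) (ddS z f) := by
  refine contDiff_of_differentiable_iteratedDeriv fun m _ => ?_
  have h := dd_deriv_smooth hf
  rw [ddS, ddI_iter _ h]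
  exact fun y => (ddI_hasDerivAt m _ (dd_iter_smooth h m) z y).differentiableAt

theorem ddS_iter (z : ℝ) {f : ℝ → ℝ} (hf : ContDiff ℝ (⊤ : ℕ∞) f) (n : ℕ) :
    iteratedDeriv n (ddS z f) = ddI n (iteratedDeriv (n + 1) f) z := by
  rw [ddS, ddI_iter _ (dd_deriv_smooth hf), iteratedDeriv_succ']

theorem ddS_mul (z : ℝ) {f : ℝ → ℝ} (hf : ContDiff ℝ (⊤ : ℕ∞) f) (y : ℝ) :
    (y - z) * ddS z f y = f y - f z := by
  have hd : Differentiable ℝ f := hf.differentiable (by simp)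
  have hc' : Continuous (deriv f) := hf.continuous_deriv (by simp)
  have h := intervalIntegral.integral_eq_sub_of_hasDerivAt (a := 0) (b := 1)
    (f := fun s : ℝ => f (z + s * (y - z))) (f' := fun s => (y - z) * deriv f (z + s * (y - z)))
    (fun s _ => by
      have h1 : HasDerivAt (fun s : ℝ => z + s * (y - z)) (y - z) s := by
        simpa using ((hasDerivAt_id s).mul_const (y - z)).const_add z
      have h2 := ((hd (z + s * (y - z))).hasDerivAt.comp s h1)
      exact h2.congr_deriv (by ring))
    (Continuous.intervalIntegrable (by fun_prop) _ _)
  rw [intervalIntegral.integral_const_mul] at h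
  simpa [ddS, ddI] using h

theorem ddS_unique (z : ℝ) {f u : ℝ → ℝ} (hf : ContDiff ℝ (⊤ : ℕ∞) f) (hu : Continuous u)
    (h : ∀ y, (y - z) * u y = f y - f z) : ddS z f = u := by
  refine Continuous.ext_on (dense_compl_singleton z) (ddS_smooth z hf).continuous hu ?_
  intro y hy
  have hy' : y - z ≠ 0 := sub_ne_zero.2 hy
  exact mul_left_cancel₀ hy' ((ddS_mul z hf y).trans (h y).symm)

theorem ddS_prod (z : ℝ) {u v : ℝ → ℝ} (hu : ContDiff ℝ (⊤ : ℕ∞) u)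
    (hv : ContDiff ℝ (⊤ : ℕ∞) v) :
    ddS z (fun y => u y * v y) = fun y => ddS z u y * v y + u z * ddS z v y := by
  refine ddS_unique z (hu.mul hv) ?_ fun y => ?_
  · have := (ddS_smooth z hu).continuous
    have := (ddS_smooth z hv).continuous
    have := hv.continuous
    fun_prop
  · linear_combination v y * ddS_mul z hu y + u z * ddS_mul z hv y

theorem ddS_comp (z : ℝ) {g φ : ℝ → ℝ} (hg : ContDiff ℝ (⊤ : ℕ∞) g)
    (hφ : ContDiff ℝ (⊤ : ℕ∞) φ) :
    ddS z (fun y => g (φ y)) = fun y => ddS z φ y * ddS (φ z) g (φ y) := by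
  refine ddS_unique z (hg.comp hφ) ?_ fun y => ?_
  · have := (ddS_smooth z hφ).continuous
    have := (ddS_smooth (φ z) hg).continuous
    have := hφ.continuous
    fun_prop
  · linear_combination ddS (φ z) g (φ y) * ddS_mul z hφ y + ddS_mul (φ z) hg (φ y)

theorem dd_simplex_integral (n : ℕ) (h : ℝ → ℝ) (hh : Continuous h) (x : Fin (n + 2) → ℝ) :
    ∫ s in {s : Fin (n + 1) → ℝ | (∀ i, 0 ≤ s i) ∧ ∑ i, s i ≤ 1},
      h ((1 - ∑ i, s i) * x 0 + ∑ i : Fin (n + 1), s i * x i.succ) =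
    ∫ t in {s : Fin n → ℝ | (∀ i, 0 ≤ s i) ∧ ∑ i, s i ≤ 1},
      ddI n h (x 0) ((1 - ∑ i, t i) * x 1 + ∑ i : Fin n, t i * x i.succ.succ) := by
  classical
  -- the three sets
  set A : Set (Fin (n + 1) → ℝ) := {s | (∀ i, 0 ≤ s i) ∧ ∑ i, s i ≤ 1} with hA
  set T : Set (Fin n → ℝ) := {s | (∀ i, 0 ≤ s i) ∧ ∑ i, s i ≤ 1} with hT
  set B : Set (ℝ × (Fin n → ℝ)) := {p | (∀ i, 0 ≤ p.2 i) ∧ 0 ≤ p.1 ∧ p.1 + ∑ i, p.2 i ≤ 1} with hB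
  set C : Set (ℝ × (Fin n → ℝ)) := {p | (∀ i, 0 ≤ p.2 i) ∧ ∑ i, p.2 i ≤ p.1 ∧ p.1 ≤ 1} with hC
  have single : ∀ (v : Fin n → ℝ), (∀ i, 0 ≤ v i) → ∀ i, v i ≤ ∑ i, v i := fun v hv i =>
    Finset.single_le_sum (f := v) (fun i _ => hv i) (Finset.mem_univ i)
  have hAc : IsClosed A := by
    simp only [hA, Set.ofPred_and, Set.ofPred_forall]
    exact (isClosed_iInter fun i => isClosed_le (by fun_prop) (by fun_prop)).inter
      (isClosed_le (by fun_prop) (by fun_prop))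
  have hTc : IsClosed T := by
    simp only [hT, Set.ofPred_and, Set.ofPred_forall]
    exact (isClosed_iInter fun i => isClosed_le (by fun_prop) (by fun_prop)).inter
      (isClosed_le (by fun_prop) (by fun_prop))
  have hBc : IsClosed B := by
    simp only [hB, Set.ofPred_and, Set.ofPred_forall]
    exact (isClosed_iInter fun i => isClosed_le (by fun_prop) (by fun_prop)).inter
      ((isClosed_le (by fun_prop) (by fun_prop)).inter (isClosed_le (by fun_prop) (by fun_prop)))
  have hCc : IsClosed C := by
    simp only [hC, Set.ofPred_and, Set.ofPred_forall]
    exact (isClosed_iInter fun i => isClosed_le (by fun_prop) (by fun_prop)).inter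
      ((isClosed_le (by fun_prop) (by fun_prop)).inter (isClosed_le (by fun_prop) (by fun_prop)))
  have hTk : IsCompact T := by
    refine (isCompact_Icc (a := (0 : Fin n → ℝ)) (b := 1)).of_isClosed_subset hTc ?_
    rintro v ⟨h1, h2⟩
    exact ⟨fun i => h1 i, fun i => (single v h1 i).trans h2⟩
  have hBk : IsCompact B := by
    refine (isCompact_Icc (a := (0 : ℝ × (Fin n → ℝ))) (b := 1)).of_isClosed_subset hBc ?_
    rintro ⟨u, v⟩ ⟨h1, h2, h3⟩
    have h0 : 0 ≤ ∑ i, v i := Finset.sum_nonneg fun i _ => h1 i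
    simp only at h1 h2 h3
    exact ⟨⟨h2, fun i => h1 i⟩, ⟨show u ≤ 1 by linarith,
      fun i => show v i ≤ 1 by linarith [single v h1 i]⟩⟩
  have hCk : IsCompact C := by
    refine (isCompact_Icc (a := (0 : ℝ × (Fin n → ℝ))) (b := 1)).of_isClosed_subset hCc ?_
    rintro ⟨u, v⟩ ⟨h1, h2, h3⟩
    have h0 : 0 ≤ ∑ i, v i := Finset.sum_nonneg fun i _ => h1 i
    simp only at h1 h2 h3
    exact ⟨⟨show 0 ≤ u by linarith, fun i => h1 i⟩, ⟨h3,
      fun i => show v i ≤ 1 by linarith [single v h1 i]⟩⟩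
  -- the integrands
  let P : ℝ × (Fin n → ℝ) → ℝ := fun p =>
    h ((1 - p.1) * x 0 + (p.1 - ∑ i, p.2 i) * x 1 + ∑ i : Fin n, p.2 i * x i.succ.succ)
  let Q : ℝ × (Fin n → ℝ) → ℝ := fun p => P (p.1 + ∑ i, p.2 i, p.2)
  let R : ℝ × (Fin n → ℝ) → ℝ := fun p => p.1 ^ n *
    h (x 0 + p.1 * ((1 - ∑ i, p.2 i) * x 1 + ∑ i : Fin n, p.2 i * x i.succ.succ - x 0))
  have hPc : Continuous P := by fun_prop
  have hQc : Continuous Q := by fun_prop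
  have hRc : Continuous R := by fun_prop
  let D : Set (ℝ × (Fin n → ℝ)) := Set.Icc 0 1 ×ˢ T
  have hDk : IsCompact D := isCompact_Icc.prod hTk
  have iP : Integrable (C.indicator P) (volume.prod volume) := by
    rw [integrable_indicator_iff hCc.measurableSet]
    exact hPc.continuousOn.integrableOn_compact (μ := volume) hCk
  have iQ : Integrable (B.indicator Q) (volume.prod volume) := by
    rw [integrable_indicator_iff hBc.measurableSet]
    exact hQc.continuousOn.integrableOn_compact (μ := volume) hBk
  have iR : Integrable (D.indicator R) (volume.prod volume) := by
    rw [integrable_indicator_iff hDk.isClosed.measurableSet]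
    exact hRc.continuousOn.integrableOn_compact (μ := volume) hDk
  have s1 : ∫ s in A, h ((1 - ∑ i, s i) * x 0 + ∑ i : Fin (n + 1), s i * x i.succ) =
      ∫ p, B.indicator Q p := by
    rw [← integral_indicator hAc.measurableSet,
      ← (volume_preserving_piFinSuccAbove (fun _ : Fin (n + 1) => ℝ) 0).integral_comp']
    congr 1
    funext s
    have hm : s ∈ A ↔ (MeasurableEquiv.piFinSuccAbove (fun _ : Fin (n + 1) => ℝ) 0) s ∈ B := by
      simp only [hA, hB, Set.mem_ofPred_eq, Fin.forall_fin_succ, Fin.sum_univ_succ,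
        MeasurableEquiv.piFinSuccAbove_apply, Fin.insertNthEquiv_symm_apply, Fin.removeNth,
        Fin.zero_succAbove]
      tauto
    by_cases hs : s ∈ A
    · rw [Set.indicator_of_mem hs, Set.indicator_of_mem (hm.1 hs)]
      simp only [Q, P, MeasurableEquiv.piFinSuccAbove_apply, Fin.insertNthEquiv_symm_apply,
        Fin.removeNth, Fin.zero_succAbove, Fin.sum_univ_succ, Fin.succ_zero_eq_one]
      congr 1
      ring
    · rw [Set.indicator_of_notMem hs, Set.indicator_of_notMem (fun h => hs (hm.2 h))]
  have s2 : ∫ p, B.indicator Q p = ∫ v, ∫ σ, C.indicator P (σ, v) := by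
    rw [Measure.volume_eq_prod, integral_prod_symm _ iQ]
    congr 1
    funext v
    rw [← integral_add_right_eq_self (fun σ => C.indicator P (σ, v)) (∑ i, v i)]
    congr 1
    funext u
    have hm : (u, v) ∈ B ↔ (u + ∑ i, v i, v) ∈ C := by
      simp [hB, hC]
    by_cases hs : (u, v) ∈ B
    · rw [Set.indicator_of_mem hs, Set.indicator_of_mem (hm.1 hs)]
    · rw [Set.indicator_of_notMem hs, Set.indicator_of_notMem (fun h => hs (hm.2 h))]
  have s3 : ∫ v, ∫ σ, C.indicator P (σ, v) = ∫ σ, ∫ v, C.indicator P (σ, v) :=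
    (integral_integral_swap (f := fun σ v => C.indicator P (σ, v)) iP).symm
  have s4 : ∫ σ, ∫ v, C.indicator P (σ, v) = ∫ σ, ∫ v, D.indicator R (σ, v) := by
    refine integral_congr_ae ?_
    have h0 : ∀ᵐ σ : ℝ, σ ≠ 0 := by
      simp [ae_iff]
    filter_upwards [h0] with σ hσ
    by_cases hσ1 : 0 < σ ∧ σ ≤ 1
    · obtain ⟨hpos, hle⟩ := hσ1
      have key := Measure.integral_comp_smul (volume : Measure (Fin n → ℝ))
        (fun v => C.indicator P (σ, v)) σ
      have hp : 0 < σ ^ n := pow_pos hpos n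
      have e : ∀ v, D.indicator R (σ, v) = σ ^ n * C.indicator P (σ, σ • v) := by
        intro v
        have hm : (σ, v) ∈ D ↔ (σ, σ • v) ∈ C := by
          simp only [D, hC, hT, Set.mem_prod, Set.mem_Icc, Set.mem_ofPred_eq, Pi.smul_apply,
            smul_eq_mul, ← Finset.mul_sum, mul_nonneg_iff_of_pos_left hpos,
            mul_le_iff_le_one_right hpos]
          constructor
          · rintro ⟨_, h1, h2⟩; exact ⟨h1, h2, hle⟩
          · rintro ⟨h1, h2, _⟩; exact ⟨⟨hpos.le, hle⟩, h1, h2⟩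
        by_cases hs : (σ, v) ∈ D
        · rw [Set.indicator_of_mem hs, Set.indicator_of_mem (hm.1 hs)]
          simp only [R, P, Pi.smul_apply, smul_eq_mul, ← Finset.mul_sum, mul_assoc]
          congr 2
          ring
        · rw [Set.indicator_of_notMem hs, Set.indicator_of_notMem (fun h => hs (hm.2 h)), mul_zero]
      simp only [e]
      rw [integral_const_mul, key, Module.finrank_fin_fun, abs_of_pos (inv_pos.2 hp), smul_eq_mul,
        mul_inv_cancel_left₀ hp.ne']
    · have e1 : ∀ v, C.indicator P (σ, v) = 0 := fun v => Set.indicator_of_notMem (by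
        rintro ⟨h1, h2, h3⟩
        have h0 : 0 ≤ ∑ i, v i := Finset.sum_nonneg fun i _ => h1 i
        exact hσ1 ⟨lt_of_le_of_ne (h0.trans h2) hσ.symm, h3⟩) _
      have e2 : ∀ v, D.indicator R (σ, v) = 0 := fun v => Set.indicator_of_notMem (by
        rintro ⟨⟨h1, h2⟩, h3⟩
        exact hσ1 ⟨lt_of_le_of_ne h1 hσ.symm, h2⟩) _
      simp only [e1, e2]
  have s5 : ∫ σ, ∫ v, D.indicator R (σ, v) = ∫ v, ∫ σ, D.indicator R (σ, v) :=
    integral_integral_swap (f := fun σ v => D.indicator R (σ, v)) iR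
  rw [s1, s2, s3, s4, s5, ← integral_indicator hTc.measurableSet]
  congr 1
  funext v
  by_cases hv : v ∈ T
  · rw [Set.indicator_of_mem hv, ddI, intervalIntegral.integral_of_le zero_le_one,
      ← integral_Icc_eq_integral_Ioc, ← integral_indicator measurableSet_Icc]
    congr 1
    funext σ
    by_cases hs : σ ∈ Set.Icc (0 : ℝ) 1
    · rw [Set.indicator_of_mem hs, Set.indicator_of_mem (show (σ, v) ∈ D from ⟨hs, hv⟩)]
    · rw [Set.indicator_of_notMem hs,
        Set.indicator_of_notMem (show (σ, v) ∉ D from fun h => hs h.1)]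
  · rw [Set.indicator_of_notMem hv]
    have e2 : ∀ σ, D.indicator R (σ, v) = 0 := fun σ =>
      Set.indicator_of_notMem (fun h => hv h.2) _
    simp [e2]

theorem divDiff_succ' {f : ℝ → ℝ} (hf : ContDiff ℝ (⊤ : ℕ∞) f) (n : ℕ) (x : Fin (n + 2) → ℝ) :
    divDiff f (n + 1) x = divDiff (ddS (x 0) f) n (fun i => x i.succ) := by
  unfold divDiff
  rw [ddS_iter _ hf, dd_simplex_integral n _ (dd_iter_smooth hf _).continuous]
  rfl

theorem divDiff_zero' (f : ℝ → ℝ) (x : Fin 1 → ℝ) : divDiff f 0 x = f (x 0) := by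
  simp [divDiff, measureReal_def, volume_pi]

theorem divDiff_add' {u v : ℝ → ℝ} (hu : ContDiff ℝ (⊤ : ℕ∞) u) (hv : ContDiff ℝ (⊤ : ℕ∞) v)
    (c : ℝ) (m : ℕ) (x : Fin (m + 1) → ℝ) :
    divDiff (fun y => u y + c * v y) m x = divDiff u m x + c * divDiff v m x := by
  induction m generalizing u v with
  | zero => simp [divDiff_zero']
  | succ m ih =>
    have e : ContDiff ℝ (⊤ : ℕ∞) (fun y => u y + c * v y) := hu.add (contDiff_const.mul hv)
    rw [divDiff_succ' hu, divDiff_succ' hv, divDiff_succ' e,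
      ← ih (ddS_smooth _ hu) (ddS_smooth _ hv)]
    congr 1
    refine ddS_unique _ e ?_ fun y => ?_
    · have := (ddS_smooth (x 0) hu).continuous
      have := (ddS_smooth (x 0) hv).continuous
      fun_prop
    · linear_combination ddS_mul (x 0) hu y + c * ddS_mul (x 0) hv y

/-- Divided difference over the window `X a, …, X (a + m)`. -/
noncomputable def ddW (f : ℝ → ℝ) (m : ℕ) (X : ℕ → ℝ) (a : ℕ) : ℝ :=
  divDiff f m (fun r : Fin (m + 1) => X (a + r.val))

theorem ddW_zero (f : ℝ → ℝ) (X : ℕ → ℝ) (a : ℕ) : ddW f 0 X a = f (X a) := by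
  simp [ddW, divDiff_zero']

theorem ddW_succ {f : ℝ → ℝ} (hf : ContDiff ℝ (⊤ : ℕ∞) f) (m : ℕ) (X : ℕ → ℝ) (a : ℕ) :
    ddW f (m + 1) X a = ddW (ddS (X a) f) m X (a + 1) := by
  unfold ddW
  rw [divDiff_succ' hf]
  congr 1
  funext r
  simp only [Fin.val_succ]
  congr 1
  omega

theorem ddW_leibniz {u v : ℝ → ℝ} (hu : ContDiff ℝ (⊤ : ℕ∞) u) (hv : ContDiff ℝ (⊤ : ℕ∞) v)
    (m : ℕ) (X : ℕ → ℝ) (a : ℕ) :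
    ddW (fun y => u y * v y) m X a =
      ∑ i ∈ Finset.range (m + 1), ddW u i X a * ddW v (m - i) X (a + i) := by
  induction m generalizing u v a with
  | zero => simp [ddW_zero]
  | succ m ih =>
    rw [ddW_succ (hu.mul hv), ddS_prod _ hu hv]
    have h1 : ddW (fun y => ddS (X a) u y * v y + u (X a) * ddS (X a) v y) m X (a + 1) =
        ddW (fun y => ddS (X a) u y * v y) m X (a + 1) +
          u (X a) * ddW (ddS (X a) v) m X (a + 1) :=
      divDiff_add' ((ddS_smooth _ hu).mul hv) (ddS_smooth _ hv) _ _ _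
    rw [h1, ih (ddS_smooth _ hu) hv, Finset.sum_range_succ' _ (m + 1), ddW_zero, Nat.sub_zero,
      Nat.add_zero, ddW_succ hv]
    congr 1
    refine Finset.sum_congr rfl fun i _ => ?_
    rw [ddW_succ hu, Nat.add_sub_add_right, Nat.add_assoc, Nat.add_comm 1 i]

theorem ddW_comp {g φ : ℝ → ℝ} (hg : ContDiff ℝ (⊤ : ℕ∞) g) (hφ : ContDiff ℝ (⊤ : ℕ∞) φ)
    (m : ℕ) (X : ℕ → ℝ) (a : ℕ) :
    ddW (fun y => g (φ y)) (m + 1) X a =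
      ∑ i ∈ Finset.range (m + 1), ddW φ (i + 1) X a *
        ddW (fun y => ddS (φ (X a)) g (φ y)) (m - i) X (a + 1 + i) := by
  have e1 : ContDiff ℝ (⊤ : ℕ∞) (fun y => g (φ y)) := hg.comp hφ
  have e2 : ContDiff ℝ (⊤ : ℕ∞) (fun y => ddS (φ (X a)) g (φ y)) := (ddS_smooth _ hg).comp hφ
  rw [ddW_succ e1, ddS_comp _ hg hφ, ddW_leibniz (ddS_smooth _ hφ) e2]
  refine Finset.sum_congr rfl fun i _ => ?_
  rw [ddW_succ hφ]

/-- Chain sum with chains of length `k` from `a` to `N`. -/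
noncomputable def ddC (N : ℕ) (φ : ℝ → ℝ) (X : ℕ → ℝ) (k : ℕ) (a : Fin (N + 1)) (g : ℝ → ℝ) : ℝ :=
  ∑ c ∈ Finset.univ.filter (fun c : Fin (k + 1) → Fin (N + 1) =>
      c 0 = a ∧ c (Fin.last k) = Fin.last N ∧ ∀ j : Fin k, c j.castSucc < c j.succ),
    divDiff g k (fun j => φ (X (c j))) *
      ∏ j : Fin k, ddW φ ((c j.succ).val - (c j.castSucc).val) X (c j.castSucc).val

theorem ddC_zero (N : ℕ) (φ : ℝ → ℝ) (X : ℕ → ℝ) (a : Fin (N + 1)) (g : ℝ → ℝ) :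
    ddC N φ X 0 a g = if a = Fin.last N then g (φ (X N)) else 0 := by
  unfold ddC
  rw [Finset.sum_filter, ← (Equiv.funUnique (Fin 1) (Fin (N + 1))).symm.sum_comp]
  rw [Finset.sum_eq_single a]
  · simp only [divDiff_zero']
    by_cases h : a = Fin.last N <;> simp [h, Equiv.funUnique, Equiv.piUnique, uniqueElim]
  · intro b _ hb
    rw [if_neg]
    rintro ⟨h, _⟩
    exact hb h
  · simp

theorem ddC_succ (N : ℕ) (φ : ℝ → ℝ) (X : ℕ → ℝ) (k : ℕ) (a : Fin (N + 1)) {g : ℝ → ℝ}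
    (hg : ContDiff ℝ (⊤ : ℕ∞) g) :
    ddC N φ X (k + 1) a g = ∑ b ∈ Finset.univ.filter (fun b => a < b),
      ddW φ (b.val - a.val) X a * ddC N φ X k b (ddS (φ (X a)) g) := by
  unfold ddC
  rw [Finset.sum_filter, ← (Fin.consEquiv (fun _ : Fin (k + 2) => Fin (N + 1))).sum_comp,
    Fintype.sum_prod_type, Finset.sum_eq_single a]
  · simp only [Finset.mul_sum, Finset.sum_filter]
    have hsw : ∀ H : Fin (N + 1) → (Fin (k + 1) → Fin (N + 1)) → ℝ,
        (∑ b, if a < b then ∑ c : Fin (k + 1) → Fin (N + 1), if c 0 = b ∧ c (Fin.last k) = Fin.last N ∧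
          (∀ j : Fin k, c j.castSucc < c j.succ) then H b c else 0 else 0) =
        ∑ c : Fin (k + 1) → Fin (N + 1), if a < c 0 ∧ c (Fin.last k) = Fin.last N ∧
          (∀ j : Fin k, c j.castSucc < c j.succ) then H (c 0) c else 0 := by
      intro H
      have : ∀ b, (if a < b then ∑ c : Fin (k + 1) → Fin (N + 1), (if c 0 = b ∧ c (Fin.last k) = Fin.last N ∧
          (∀ j : Fin k, c j.castSucc < c j.succ) then H b c else 0) else 0) =
          ∑ c : Fin (k + 1) → Fin (N + 1), (if c 0 = b then (if a < c 0 ∧ c (Fin.last k) = Fin.last N ∧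
          (∀ j : Fin k, c j.castSucc < c j.succ) then H (c 0) c else 0) else 0) := by
        intro b
        split_ifs with hb
        · refine Finset.sum_congr rfl fun c _ => ?_
          by_cases hcb : c 0 = b
          · subst hcb; simp [hb]
          · simp [hcb]
        · symm
          refine Finset.sum_eq_zero fun c _ => ?_
          by_cases hcb : c 0 = b
          · subst hcb; simp [hb]
          · simp [hcb]
      simp only [this]
      rw [Finset.sum_comm]
      refine Finset.sum_congr rfl fun c _ => ?_
      simp
    have hsw' := hsw (fun b c => ddW φ (b.val - a.val) X a *
      (divDiff (ddS (φ (X a)) g) k (fun j => φ (X (c j))) *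
      ∏ j : Fin k, ddW φ ((c j.succ).val - (c j.castSucc).val) X (c j.castSucc).val))
    simp only [mul_ite, mul_zero]
    refine Eq.trans ?_ hsw'.symm
    refine Finset.sum_congr rfl fun c _ => ?_
    have hcond : ((Fin.consEquiv (fun _ : Fin (k + 2) => Fin (N + 1))) (a, c) 0 = a ∧
        (Fin.consEquiv (fun _ : Fin (k + 2) => Fin (N + 1))) (a, c) (Fin.last (k + 1)) = Fin.last N ∧
        ∀ j : Fin (k + 1), (Fin.consEquiv (fun _ : Fin (k + 2) => Fin (N + 1))) (a, c) j.castSucc <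
          (Fin.consEquiv (fun _ : Fin (k + 2) => Fin (N + 1))) (a, c) j.succ) ↔
        (a < c 0 ∧ c (Fin.last k) = Fin.last N ∧ (∀ j : Fin k, c j.castSucc < c j.succ)) := by
      simp only [Fin.consEquiv_apply, Fin.cons_zero, ← Fin.succ_last, Fin.cons_succ,
        Fin.forall_fin_succ (n := k), Fin.castSucc_zero, ← Fin.succ_castSucc]
      tauto
    rw [if_congr hcond rfl rfl]
    refine if_congr Iff.rfl ?_ rfl
    rw [divDiff_succ' hg, Fin.prod_univ_succ]
    simp only [Fin.consEquiv_apply, Fin.cons_zero, Fin.cons_succ, Fin.castSucc_zero,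
      ← Fin.succ_castSucc]
    ring
  · intro b _ hb
    refine Finset.sum_eq_zero fun c _ => ?_
    rw [if_neg]
    rintro ⟨h, _⟩
    exact hb (by simpa using h)
  · simp

theorem ddC_eq_zero (N : ℕ) (φ : ℝ → ℝ) (X : ℕ → ℝ) (k : ℕ) (a : Fin (N + 1)) {g : ℝ → ℝ}
    (hg : ContDiff ℝ (⊤ : ℕ∞) g) (h : N < k + a.val) : ddC N φ X k a g = 0 := by
  induction k generalizing a g with
  | zero => have := a.isLt; omega
  | succ k ih =>
    rw [ddC_succ _ _ _ _ _ hg]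
    refine Finset.sum_eq_zero fun b hb => ?_
    have hb' : a.val < b.val := (Finset.mem_filter.1 hb).2
    rw [ih b (ddS_smooth _ hg) (by omega), mul_zero]

theorem ddW_chain (N : ℕ) {φ : ℝ → ℝ} (hφ : ContDiff ℝ (⊤ : ℕ∞) φ) (X : ℕ → ℝ) (m : ℕ)
    (a : Fin (N + 1)) (hm : a.val + m = N) {g : ℝ → ℝ} (hg : ContDiff ℝ (⊤ : ℕ∞) g) :
    ddW (fun y => g (φ y)) m X a = ∑ k ∈ Finset.range (N + 1), ddC N φ X k a g := by
  induction m using Nat.strong_induction_on generalizing a g with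
  | _ m ih =>
  rw [Finset.sum_range_succ', ddC_zero]
  cases m with
  | zero =>
    have ha : a = Fin.last N := Fin.ext (by simpa using hm)
    rw [if_pos ha, ddW_zero, Finset.sum_eq_zero, zero_add, ha, Fin.val_last]
    intro k _
    exact ddC_eq_zero _ _ _ _ _ hg (by omega)
  | succ m =>
    have ha : a ≠ Fin.last N := fun h => by
      have := congrArg Fin.val h
      simp only [Fin.val_last] at this
      omega
    rw [if_neg ha, add_zero]
    simp only [ddC_succ _ _ _ _ _ hg]
    rw [Finset.sum_comm, ddW_comp hg hφ]
    have hG := ddS_smooth (φ (X a)) hg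
    have hsum : ∀ b : Fin (N + 1), a < b →
        ∑ k ∈ Finset.range N, ddW φ (b.val - a.val) X a * ddC N φ X k b (ddS (φ (X a)) g) =
        ddW φ (b.val - a.val) X a *
          ddW (fun y => ddS (φ (X a)) g (φ y)) (N - b.val) X b.val := by
      intro b hb
      have hb' : a.val < b.val := hb
      rw [← Finset.mul_sum, ih (N - b.val) (by omega) b (by have := b.isLt; omega) hG,
        Finset.sum_range_succ, ddC_eq_zero N φ X N b hG (by omega), add_zero]
    rw [Finset.sum_congr rfl fun b hb => hsum b (Finset.mem_filter.1 hb).2]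
    refine Finset.sum_bij (fun i hi => (⟨a.val + 1 + i, by
      have := Finset.mem_range.1 hi; omega⟩ : Fin (N + 1))) ?_ ?_ ?_ ?_
    · intro i hi
      simp only [Finset.mem_filter, Finset.mem_univ, true_and, Fin.lt_def]
      omega
    · intro i _ j _ hij
      have := congrArg Fin.val hij
      simp only at this
      omega
    · intro b hb
      have hb' : a.val < b.val := (Finset.mem_filter.1 hb).2
      have := b.isLt
      refine ⟨b.val - a.val - 1, Finset.mem_range.2 (by omega), Fin.ext ?_⟩
      simp only
      omega
    · intro i hi
      have := Finset.mem_range.1 hi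
      simp only
      rw [show a.val + 1 + i - a.val = i + 1 by omega, show N - (a.val + 1 + i) = m - i by omega]

/-- Chain rule (Faà di Bruno type) for divided differences: for `f = g ∘ φ`,
`f[x₀,…,xₙ] = ∑_{k=1}^n ∑_{0 = i₀ < ⋯ < i_k = n} g[φ(x_{i₀}),…,φ(x_{i_k})]
∏_{j} φ[x_{i_j},…,x_{i_{j+1}}]`, the inner sum being over strictly increasing
chains `c` from `0` to `n`. -/
theorem divDiff_chain_rule (n : ℕ) (hn : 1 ≤ n) (g φ : ℝ → ℝ)
    (hg : ContDiff ℝ (⊤ : ℕ∞) g) (hφ : ContDiff ℝ (⊤ : ℕ∞) φ) (x : Fin (n + 1) → ℝ) :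
    divDiff (fun u : ℝ => g (φ u)) n x =
      ∑ k ∈ Finset.Icc 1 n,
        ∑ c ∈ Finset.univ.filter (fun c : Fin (k + 1) → Fin (n + 1) =>
            c 0 = 0 ∧ c (Fin.last k) = Fin.last n ∧
              ∀ j : Fin k, c j.castSucc < c j.succ),
          divDiff g k (fun j => φ (x (c j))) *
            ∏ j : Fin k,
              divDiff φ ((c j.succ).val - (c j.castSucc).val)
                (fun r : Fin ((c j.succ).val - (c j.castSucc).val + 1) =>
                  x ⟨(c j.castSucc).val + r.val, by
                    have h1 := r.isLt; have h2 := (c j.succ).isLt; omega⟩) := by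

  let X : ℕ → ℝ := fun i => if h : i < n + 1 then x ⟨i, h⟩ else 0
  have hX : ∀ (i : ℕ) (h : i < n + 1), x ⟨i, h⟩ = X i := fun i h => by simp only [X]; rw [dif_pos h]
  have hX' : ∀ i : Fin (n + 1), x i = X i.val := fun i => hX i.val i.isLt
  have main := ddW_chain n hφ X n 0 (by simp) hg
  rw [Finset.sum_range_succ', ddC_zero, if_neg (fun h => by
    have := congrArg Fin.val h
    simp only [Fin.val_last, Fin.val_zero] at this
    omega), add_zero] at main
  have hl : divDiff (fun u : ℝ => g (φ u)) n x = ddW (fun y => g (φ y)) n X (0 : Fin (n + 1)) := by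
    unfold ddW
    congr 1
    funext r
    rw [hX' r]
    simp
  rw [hl, main, Finset.range_eq_Ico, Finset.sum_Ico_add' (fun k => ddC n φ X k 0 g) 0 n 1]
  refine Finset.sum_congr (by ext; simp) fun k _ => ?_
  unfold ddC
  refine Finset.sum_congr rfl fun c _ => ?_
  simp only [hX, ddW, hX']
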